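/- arXiv:math/0608591 — 2 statements merged into one kernel-verified Lean document; each statement's English description precedes it below -/
import Mathlib

section
/- Let 𝒜 be a real central arrangement consisting of a single hyperplane H₁ and let m be a positive integer. Then the number of admissible maps is |AM(𝒜, m)| = 2^{2^m − 2}. -/
/-!
The chamber containing a point `x` consists of the points at which every form has the same sign as
at `x`: this set is convex, and no form changes sign on a connected subset of the complement. Hence
a chamber is determined by its signs. An admissible `Φ` fixes the diagonal of `Ch^m`, because
`εⱼ^σ` sends `(C, …, C)` to `(+, …, +)` for `σ = εⱼ^+(C)`.

For a single hyperplane each `ε₁^σ` is a bijection from the chambers onto `{+, -}`, so conversely a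
map that fixes the diagonal is admissible, with `φ₁^σ` its conjugate by `ε₁^σ`. The diagonal has two
points, and the values at the other `2^m - 2` points of `Ch^m` are arbitrary.
-/

noncomputable section
attribute [local instance] Classical.propDecidable

/-- A (nonempty if `ι` is nonempty) real central arrangement of hyperplanes in `ℝ^ℓ`,
given by a family of nonzero defining linear forms with pairwise distinct kernels
(the hyperplanes `H j = ker (form j)`). -/
structure Arrangement (ℓ : ℕ) (ι : Type) [Fintype ι] where
  form : ι → ((Fin ℓ → ℝ) →ₗ[ℝ] ℝ)
  form_ne_zero : ∀ j, form j ≠ 0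
  ker_injective : ∀ j k, LinearMap.ker (form j) = LinearMap.ker (form k) → j = k

namespace Arrangement

variable {ℓ : ℕ} {ι : Type} [Fintype ι]

/-- The complement `ℝ^ℓ ∖ (H₁ ∪ ⋯ ∪ Hₙ)`. -/
def Complement (A : Arrangement ℓ ι) : Set (Fin ℓ → ℝ) :=
  {x | ∀ j, A.form j x ≠ 0}

/-- A chamber is a connected component of the complement. -/
def IsChamber (A : Arrangement ℓ ι) (C : Set (Fin ℓ → ℝ)) : Prop :=
  ∃ x ∈ A.Complement, C = connectedComponentIn A.Complement x

/-- The set (type) of chambers of the arrangement. -/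
abbrev Ch (A : Arrangement ℓ ι) : Type := {C : Set (Fin ℓ → ℝ) // A.IsChamber C}

/-- `εⱼ^σ(C) = στ` when `C ⊆ Hⱼ^τ`; `B = {+,-}` is realized as `ℤˣ`, `+ = 1`, `- = -1`. -/
def eps (A : Arrangement ℓ ι) (j : ι) (σ : ℤˣ) (C : A.Ch) : ℤˣ :=
  σ * (if ∀ x ∈ C.1, 0 < A.form j x then 1 else -1)

/-- `Φ : Ch^m → Ch` is admissible if there is a family `φⱼ^σ : B^m → B` with
`φⱼ^σ(+,…,+) = +` and `εⱼ^σ ∘ Φ = φⱼ^σ ∘ εⱼ^σ` (componentwise) for all `j, σ`. -/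
def IsAdmissible (A : Arrangement ℓ ι) (m : ℕ) (Φ : (Fin m → A.Ch) → A.Ch) : Prop :=
  ∃ φ : ι → ℤˣ → ((Fin m → ℤˣ) → ℤˣ),
    (∀ j σ, φ j σ (fun _ => 1) = 1) ∧
    ∀ j σ 𝒞, A.eps j σ (Φ 𝒞) = φ j σ (fun i => A.eps j σ (𝒞 i))

/-- `r(ℬ) = codim (⋂_{H ∈ ℬ} H)` for the subarrangement indexed by `S`. -/
def rnkOn (A : Arrangement ℓ ι) (S : Finset ι) : ℕ :=
  ℓ - Module.finrank ℝ ↥(⨅ j ∈ S, LinearMap.ker (A.form j))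

/-- `r(𝒜)`. -/
def rnk (A : Arrangement ℓ ι) : ℕ := A.rnkOn Finset.univ

/-- The subarrangement indexed by `S` decomposes as a disjoint union of two nonempty
subarrangements with additive rank. -/
def DecomposableOn (A : Arrangement ℓ ι) (S : Finset ι) : Prop :=
  ∃ S₁ S₂ : Finset ι, S₁.Nonempty ∧ S₂.Nonempty ∧ Disjoint S₁ S₂ ∧ S₁ ∪ S₂ = S ∧
    A.rnkOn S = A.rnkOn S₁ + A.rnkOn S₂

def IndecomposableOn (A : Arrangement ℓ ι) (S : Finset ι) : Prop := ¬ A.DecomposableOn S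

def Decomposable (A : Arrangement ℓ ι) : Prop := A.DecomposableOn Finset.univ

def Indecomposable (A : Arrangement ℓ ι) : Prop := ¬ A.Decomposable

/-- The subarrangement of `A` consisting of the hyperplanes indexed by `S`. -/
def restrict (A : Arrangement ℓ ι) (S : Finset ι) : Arrangement ℓ {j : ι // j ∈ S} where
  form := fun j => A.form j.1
  form_ne_zero := fun j => A.form_ne_zero j.1
  ker_injective := fun j k h => Subtype.ext (A.ker_injective j.1 k.1 h)

/-- A dependent subarrangement: `r(ℬ) < |ℬ|`. -/
def DependentOn (A : Arrangement ℓ ι) (S : Finset ι) : Prop := A.rnkOn S < S.card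

/-- A circuit: a minimally dependent subarrangement. -/
def IsCircuitOn (A : Arrangement ℓ ι) (S : Finset ι) : Prop :=
  A.DependentOn S ∧ ∀ T ⊂ S, ¬ A.DependentOn T

end Arrangement

theorem connectedComponentIn_setOf_forall_ne_zero {E ι : Type*} [AddCommGroup E] [Module ℝ E]
    [TopologicalSpace E] [ContinuousAdd E] [ContinuousSMul ℝ E] (f : ι → E →L[ℝ] ℝ) {x : E}
    (hx : ∀ j, f j x ≠ 0) :
    connectedComponentIn {y | ∀ j, f j y ≠ 0} x = {y | ∀ j, 0 < f j x * f j y} := by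
  apply subset_antisymm
  · intro y hy j
    by_contra! hxy
    obtain ⟨z, hz, hfz⟩ : (0 : ℝ) ∈ (fun z => f j x * f j z) '' connectedComponentIn _ x :=
      isPreconnected_connectedComponentIn.intermediate_value hy (mem_connectedComponentIn hx)
        (by fun_prop) ⟨hxy, mul_self_nonneg _⟩
    exact mul_ne_zero (hx j) (connectedComponentIn_subset _ _ hz j) hfz
  · have hconvex : Convex ℝ {y | ∀ j, 0 < f j x * f j y} := by
      rw [Set.ofPred_forall]
      exact convex_iInter fun j => convex_halfSpace_gt (f j x • f j).toLinearMap.isLinear 0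
    exact hconvex.isPreconnected.subset_connectedComponentIn (fun j => mul_self_pos.2 (hx j))
      fun y hy j => right_ne_zero_of_mul (hy j).ne'

theorem card_comp_eq {α β γ : Type*} [Finite β] {i : α → β} (hi : Function.Injective i)
    (g : α → γ) :
    Nat.card {f : β → γ // f ∘ i = g} = Nat.card γ ^ (Nat.card β - Nat.card α) := by
  let e := Equiv.ofInjective i hi
  have hcomp (f : β → γ) : f ∘ i = g ↔ f ∘ Subtype.val = g ∘ e.symm := by
    rw [Equiv.eq_comp_symm]
    rfl
  have hcompl : Nat.card {b // b ∉ Set.range i} = Nat.card β - Nat.card α :=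
    (Set.ncard_compl _).trans (congrArg _ (Nat.card_congr e).symm)
  rw [Nat.card_congr (Equiv.subtypeEquivRight hcomp), Nat.card_congr (Equiv.subtypePreimage _ _),
    Nat.card_fun, hcompl]

namespace Arrangement

variable {ℓ : ℕ} {ι : Type} [Fintype ι] {A : Arrangement ℓ ι}

theorem complement_nonempty (A : Arrangement ℓ ι) : A.Complement.Nonempty :=
  Module.Dual.exists_forall_ne_zero_of_forall_exists A.form fun j =>
    DFunLike.ne_iff.1 (A.form_ne_zero j)

theorem neg_mem_complement {x : Fin ℓ → ℝ} (hx : x ∈ A.Complement) : -x ∈ A.Complement :=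
  fun j => by simpa using hx j

theorem IsChamber.nonempty {C : Set (Fin ℓ → ℝ)} (hC : A.IsChamber C) : C.Nonempty := by
  obtain ⟨x, hx, rfl⟩ := hC
  exact ⟨x, mem_connectedComponentIn hx⟩

theorem IsChamber.subset_complement {C : Set (Fin ℓ → ℝ)} (hC : A.IsChamber C) :
    C ⊆ A.Complement := by
  obtain ⟨x, -, rfl⟩ := hC
  exact connectedComponentIn_subset _ _

theorem IsChamber.eq_setOf_forall_mul_pos {C : Set (Fin ℓ → ℝ)} (hC : A.IsChamber C)
    {x : Fin ℓ → ℝ} (hx : x ∈ C) : C = {y | ∀ j, 0 < A.form j x * A.form j y} := by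
  have hx' := hC.subset_complement hx
  obtain ⟨z, -, rfl⟩ := hC
  rw [connectedComponentIn_eq hx]
  exact connectedComponentIn_setOf_forall_ne_zero (fun j => (A.form j).toContinuousLinearMap) hx'

theorem exists_mem_chamber {x : Fin ℓ → ℝ} (hx : x ∈ A.Complement) : ∃ C : A.Ch, x ∈ C.1 :=
  ⟨⟨_, x, hx, rfl⟩, mem_connectedComponentIn hx⟩

theorem eps_eq_of_mem {C : A.Ch} {x : Fin ℓ → ℝ} (hx : x ∈ C.1) (j : ι) (σ : ℤˣ) :
    A.eps j σ C = σ * if 0 < A.form j x then 1 else -1 := by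
  have hpos : (∀ y ∈ C.1, 0 < A.form j y) ↔ 0 < A.form j x := by
    refine ⟨fun h => h x hx, fun h y hy => ?_⟩
    rw [C.2.eq_setOf_forall_mul_pos hx] at hy
    exact (pos_iff_pos_of_mul_pos (hy j)).1 h
  simp only [eps, hpos]

theorem eps_eq_mul (j : ι) (σ : ℤˣ) (C : A.Ch) : A.eps j σ C = σ * A.eps j 1 C := by
  simp only [eps, one_mul]

theorem eps_eps_one (j : ι) (C : A.Ch) : A.eps j (A.eps j 1 C) C = 1 := by
  rw [eps_eq_mul, Int.units_mul_self]

theorem eps_eq_neg_of_mem_of_neg_mem {C D : A.Ch} {x : Fin ℓ → ℝ} (hC : x ∈ C.1) (hD : -x ∈ D.1)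
    (j : ι) (σ : ℤˣ) : A.eps j σ D = -A.eps j σ C := by
  rw [eps_eq_of_mem hC, eps_eq_of_mem hD, map_neg]
  rcases (C.2.subset_complement hC j).lt_or_gt with hneg | hpos
  · simp [hneg, hneg.not_gt]
  · simp [hpos, hpos.le]

theorem eq_of_forall_eps_eq {C D : A.Ch} (σ : ι → ℤˣ)
    (h : ∀ j, A.eps j (σ j) C = A.eps j (σ j) D) : C = D := by
  obtain ⟨x, hx⟩ := C.2.nonempty
  obtain ⟨y, hy⟩ := D.2.nonempty
  have hxy : y ∈ C.1 := by
    rw [C.2.eq_setOf_forall_mul_pos hx]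
    intro j
    have hj := h j
    rw [eps_eq_of_mem hx, eps_eq_of_mem hy, mul_right_inj] at hj
    have hxj := C.2.subset_complement hx j
    have hyj := D.2.subset_complement hy j
    rcases hxj.lt_or_gt with hxneg | hxpos <;> rcases hyj.lt_or_gt with hyneg | hypos
    · exact mul_pos_of_neg_of_neg hxneg hyneg
    · simp [hxneg.not_gt, hypos] at hj
    · simp [hxpos, hyneg.not_gt] at hj
    · exact mul_pos hxpos hypos
  exact Subtype.ext <| (C.2.eq_setOf_forall_mul_pos hxy).trans (D.2.eq_setOf_forall_mul_pos hy).symm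

theorem eps_surjective (j : ι) (σ : ℤˣ) : Function.Surjective (A.eps j σ) := by
  intro τ
  obtain ⟨x, hx⟩ := A.complement_nonempty
  obtain ⟨C, hC⟩ := exists_mem_chamber hx
  obtain ⟨D, hD⟩ := exists_mem_chamber (neg_mem_complement hx)
  by_cases hτ : τ = A.eps j σ C
  · exact ⟨C, hτ.symm⟩
  · exact ⟨D, (eps_eq_neg_of_mem_of_neg_mem hC hD j σ).trans (Int.units_ne_iff_eq_neg.1 hτ).symm⟩

theorem eps_bijective [Subsingleton ι] (j : ι) (σ : ℤˣ) : Function.Bijective (A.eps j σ) :=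
  ⟨fun _ _ h => eq_of_forall_eps_eq (fun _ => σ) fun k => Subsingleton.elim j k ▸ h,
    eps_surjective j σ⟩

theorem IsAdmissible.apply_const {m : ℕ} {Φ : (Fin m → A.Ch) → A.Ch} (hΦ : A.IsAdmissible m Φ)
    (C : A.Ch) : Φ (fun _ => C) = C := by
  obtain ⟨φ, hφ_one, hφ⟩ := hΦ
  refine eq_of_forall_eps_eq (fun j => A.eps j 1 C) fun j => ?_
  rw [hφ, eps_eps_one, hφ_one]

theorem isAdmissible_of_forall_apply_const [Subsingleton ι] {m : ℕ} {Φ : (Fin m → A.Ch) → A.Ch}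
    (hΦ : ∀ C, Φ (fun _ => C) = C) : A.IsAdmissible m Φ := by
  let e (j : ι) (σ : ℤˣ) : A.Ch ≃ ℤˣ := Equiv.ofBijective _ (eps_bijective j σ)
  refine ⟨fun j σ s => e j σ (Φ fun i => (e j σ).symm (s i)), fun j σ => ?_, fun j σ 𝒞 => ?_⟩
  · simp only [hΦ, Equiv.apply_symm_apply]
  · change e j σ (Φ 𝒞) = e j σ (Φ fun i => (e j σ).symm (e j σ (𝒞 i)))
    simp only [Equiv.symm_apply_apply]

theorem isAdmissible_iff_comp_const [Subsingleton ι] {m : ℕ} {Φ : (Fin m → A.Ch) → A.Ch} :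
    A.IsAdmissible m Φ ↔ Φ ∘ Function.const (Fin m) = id :=
  ⟨fun hΦ => funext hΦ.apply_const, fun hΦ => isAdmissible_of_forall_apply_const (congrFun hΦ)⟩

end Arrangement

/-- **Lemma.** For an arrangement consisting of a single hyperplane,
`|AM(𝒜, m)| = 2^{2^m − 2}`. -/
theorem card_am_single_hyperplane {ℓ : ℕ} (A : Arrangement ℓ (Fin 1)) (m : ℕ) (hm : 0 < m) :
    Nat.card {Φ : (Fin m → A.Ch) → A.Ch // A.IsAdmissible m Φ} = 2 ^ (2 ^ m - 2) := by
  let e : A.Ch ≃ ℤˣ := Equiv.ofBijective _ (Arrangement.eps_bijective 0 1)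
  have : Finite A.Ch := .of_equiv _ e.symm
  have : Nonempty (Fin m) := ⟨⟨0, hm⟩⟩
  have hcard : Nat.card A.Ch = 2 := by
    rw [Nat.card_congr e, Nat.card_eq_fintype_card, Fintype.card_units_int]
  rw [Nat.card_congr (Equiv.subtypeEquivRight fun _ => Arrangement.isAdmissible_iff_comp_const),
    card_comp_eq Function.const_injective, Nat.card_fun, hcard, Nat.card_fin]
end
end

section
/- (Arrow's impossibility theorem, arrangement form) Let ℓ ≥ 3 and let 𝒜 be the braid arrangement in ℝ^ℓ, i.e., 𝒜 = {H_{ij} : 1 ≤ i < j ≤ ℓ} with H_{ij} = ker(x_i − x_j), whose chambers correspond bijectively to permutations π of {1,…,ℓ} via the chamber {x : x_{π(1)} < x_{π(2)} < ⋯ < x_{π(ℓ)}}. Then for every positive integer m, every admissible map Φ : Ch^m → Ch is the projection onto the h-th component for some h ∈ {1,…,m}. -/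
/-!
Because a chamber is connected and avoids the hyperplanes, each `x i - x j` has constant sign on
it; because the points with prescribed signs form a convex set, these signs determine the chamber.
So a chamber of the braid arrangement is a strict ranking of the coordinates, and admissibility,
read off hyperplane by hyperplane, is independence of irrelevant alternatives together with
unanimity.

For such aggregation rules, call a set `S` of voters decisive for `(i, j)` if society ranks `i`
above `j` whenever exactly the voters in `S` do. Transitivity of the social ranking shows that if
`S` is decisive for `(i, j)` and `T` for `(j, k)`, then every `U` with `S ∩ T ⊆ U ⊆ S ∪ T` is
decisive for `(i, k)`. With `S` or `T` the set of all voters, this makes decisiveness upward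
closed and independent of the pair; with `U = S ∩ T`, it makes it closed under intersections.
Exactly one of `S` and `Sᶜ` is decisive, so the decisive sets form an ultrafilter, and an
ultrafilter on a finite set of voters is principal: its generator is the dictator.
-/

noncomputable section
attribute [local instance] Classical.propDecidable

section SocialChoice

variable {V B X : Type*} {P : B → X → X → Prop} {F : (V → B) → B} {i j k i' j' : X} {S T U : Set V}

/-- Arrow's axioms for a rule `F` aggregating the ballots of the voters `V` into one ballot. Ballots
are abstract: `P b i j` says that `b` ranks `i` strictly above `j`. Instead of assuming that every
strict ranking occurs as a ballot, we only ask that three alternatives can be ranked in any order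
(`exists_chain`). -/
structure IsArrovian (P : B → X → X → Prop) (F : (V → B) → B) : Prop where
  three_le_card : 3 ≤ ENat.card X
  isStrictTotalOrder : ∀ b, IsStrictTotalOrder X (P b)
  exists_chain : ∀ i j k, i ≠ j → j ≠ k → i ≠ k → ∃ b, P b i j ∧ P b j k
  independence : ∀ i j, i ≠ j → ∀ c d : V → B,
    (∀ v, P (c v) i j ↔ P (d v) i j) → (P (F c) i j ↔ P (F d) i j)
  unanimity : ∀ i j, i ≠ j → ∀ c : V → B, (∀ v, P (c v) i j) → P (F c) i j

/-- The set `S` of voters is decisive for `(i, j)`: if exactly the voters in `S` rank `i` above `j`,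
then so does society. -/
def IsDecisive (P : B → X → X → Prop) (F : (V → B) → B) (i j : X) (S : Set V) : Prop :=
  ∀ c : V → B, (∀ v, P (c v) i j ↔ v ∈ S) → P (F c) i j

namespace IsArrovian

theorem exists_third (h : IsArrovian P F) (i j : X) : ∃ k, k ≠ i ∧ k ≠ j :=
  ENat.exists_ne_ne_of_three_le h.three_le_card i j

theorem not_rel_self (h : IsArrovian P F) (b : B) (i : X) : ¬ P b i i :=
  have := h.isStrictTotalOrder b
  irrefl i

theorem rel_trans (h : IsArrovian P F) {b : B} (hij : P b i j) (hjk : P b j k) : P b i k :=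
  have := h.isStrictTotalOrder b
  _root_.trans hij hjk

theorem rel_swap_iff (h : IsArrovian P F) (hij : i ≠ j) (b : B) : P b j i ↔ ¬ P b i j := by
  have := h.isStrictTotalOrder b
  exact ⟨fun hji => asymm hji,
    fun hn => ((trichotomous_of (P b) i j).resolve_left hn).resolve_left hij⟩

theorem exists_ballot_of_chain (h : IsArrovian P F) (hij : i ≠ j) (hjk : j ≠ k) (hik : i ≠ k) :
    ∃ b, (P b i j ∧ P b j k ∧ P b i k) ∧ ¬ P b j i ∧ ¬ P b k j ∧ ¬ P b k i := by
  obtain ⟨b, bij, bjk⟩ := h.exists_chain i j k hij hjk hik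
  have bik := h.rel_trans bij bjk
  simp only [h.rel_swap_iff hij, h.rel_swap_iff hjk, h.rel_swap_iff hik, not_not]
  exact ⟨b, ⟨bij, bjk, bik⟩, bij, bjk, bik⟩

theorem exists_ballot (h : IsArrovian P F) (hij : i ≠ j) (hjk : j ≠ k) (hik : i ≠ k)
    {p q r : Prop} (hpqr : p → q → r) (hr : r → p ∨ q) :
    ∃ b, (P b i j ↔ p) ∧ (P b j k ↔ q) ∧ (P b i k ↔ r) := by
  have ijk := h.exists_ballot_of_chain hij hjk hik
  have ikj := h.exists_ballot_of_chain hik hjk.symm hij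
  have jik := h.exists_ballot_of_chain hij.symm hik hjk
  have jki := h.exists_ballot_of_chain hjk hik.symm hij.symm
  have kij := h.exists_ballot_of_chain hik.symm hij hjk.symm
  have kji := h.exists_ballot_of_chain hjk.symm hij.symm hik.symm
  -- The six truth assignments satisfying `hpqr` and `hr` are exactly those of the six rankings.
  by_cases hp : p <;> by_cases hq : q <;> by_cases hr' : r <;> grind

theorem exists_profile (h : IsArrovian P F) (hij : i ≠ j) (hjk : j ≠ k) (hik : i ≠ k)
    (hST : S ∩ T ⊆ U) (hU : U ⊆ S ∪ T) :
    ∃ c : V → B, (∀ v, P (c v) i j ↔ v ∈ S) ∧ (∀ v, P (c v) j k ↔ v ∈ T) ∧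
      (∀ v, P (c v) i k ↔ v ∈ U) := by
  choose c hc using fun v => h.exists_ballot hij hjk hik (p := v ∈ S) (q := v ∈ T) (r := v ∈ U)
    (fun hS hT => hST ⟨hS, hT⟩) (fun hv => hU hv)
  exact ⟨c, fun v => (hc v).1, fun v => (hc v).2.1, fun v => (hc v).2.2⟩

theorem isDecisive_iff (h : IsArrovian P F) (hij : i ≠ j) {c : V → B}
    (hc : ∀ v, P (c v) i j ↔ v ∈ S) : IsDecisive P F i j S ↔ P (F c) i j :=
  ⟨fun hS => hS c hc, fun hF d hd =>
    (h.independence i j hij c d fun v => (hc v).trans (hd v).symm).1 hF⟩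

theorem isDecisive_univ (h : IsArrovian P F) (hij : i ≠ j) : IsDecisive P F i j Set.univ :=
  fun c hc => h.unanimity i j hij c fun v => (hc v).2 (Set.mem_univ v)

theorem isDecisive_trans (h : IsArrovian P F) (hij : i ≠ j) (hjk : j ≠ k) (hik : i ≠ k)
    (hS : IsDecisive P F i j S) (hT : IsDecisive P F j k T) (hST : S ∩ T ⊆ U) (hU : U ⊆ S ∪ T) :
    IsDecisive P F i k U := by
  obtain ⟨c, cS, cT, cU⟩ := h.exists_profile hij hjk hik hST hU
  exact (h.isDecisive_iff hik cU).2 (h.rel_trans (hS c cS) (hT c cT))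

theorem isDecisive_swap (h : IsArrovian P F) (hij : i ≠ j) (hS : IsDecisive P F i j S)
    (hSU : S ⊆ U) : IsDecisive P F j i U := by
  obtain ⟨k, hki, hkj⟩ := h.exists_third i j
  have hik : IsDecisive P F i k U :=
    h.isDecisive_trans hij hkj.symm hki.symm hS (h.isDecisive_univ hkj.symm) (by simpa) (by simp)
  have hjk : IsDecisive P F j k U :=
    h.isDecisive_trans hij.symm hki.symm hkj.symm (h.isDecisive_univ hij.symm) hik (by simp)
      (by simp)
  exact h.isDecisive_trans hkj.symm hki hij.symm hjk (h.isDecisive_univ hki) (by simp) (by simp)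

theorem isDecisive_mono (h : IsArrovian P F) (hij : i ≠ j) (hS : IsDecisive P F i j S)
    (hSU : S ⊆ U) : IsDecisive P F i j U :=
  h.isDecisive_swap hij.symm (h.isDecisive_swap hij hS hSU) subset_rfl

theorem isDecisive_replace_right (h : IsArrovian P F) (hij : i ≠ j) (hik : i ≠ k)
    (hS : IsDecisive P F i j S) : IsDecisive P F i k S := by
  obtain rfl | hjk := eq_or_ne j k
  · exact hS
  · exact h.isDecisive_trans hij hjk hik hS (h.isDecisive_univ hjk) (by simp) (by simp)

theorem isDecisive_replace_left (h : IsArrovian P F) (hjk : j ≠ k) (hik : i ≠ k)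
    (hS : IsDecisive P F j k S) : IsDecisive P F i k S := by
  obtain rfl | hij := eq_or_ne i j
  · exact hS
  · exact h.isDecisive_trans hij hjk hik (h.isDecisive_univ hij) hS (by simp) (by simp)

theorem isDecisive_of_isDecisive (h : IsArrovian P F) (hij : i ≠ j) (hij' : i' ≠ j')
    (hS : IsDecisive P F i j S) : IsDecisive P F i' j' S := by
  obtain rfl | hne := eq_or_ne i j'
  · exact h.isDecisive_replace_left hij.symm hij' (h.isDecisive_swap hij hS subset_rfl)
  · exact h.isDecisive_replace_left hne hij' (h.isDecisive_replace_right hij hne hS)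

theorem isDecisive_inter (h : IsArrovian P F) (hij : i ≠ j) (hS : IsDecisive P F i j S)
    (hT : IsDecisive P F i j T) : IsDecisive P F i j (S ∩ T) := by
  obtain ⟨k, hki, hkj⟩ := h.exists_third i j
  have hT' : IsDecisive P F j k T := h.isDecisive_of_isDecisive hij hkj.symm hT
  have hik : IsDecisive P F i k (S ∩ T) :=
    h.isDecisive_trans hij hkj.symm hki.symm hS hT' subset_rfl
      (Set.inter_subset_left.trans Set.subset_union_left)
  exact h.isDecisive_replace_right hki.symm hij hik

theorem not_isDecisive_compl_iff (h : IsArrovian P F) (hij : i ≠ j) :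
    ¬ IsDecisive P F i j Sᶜ ↔ IsDecisive P F i j S := by
  obtain ⟨k, hki, hkj⟩ := h.exists_third i j
  obtain ⟨c, hc, -, -⟩ := h.exists_profile hij hkj.symm hki.symm
    (S := S) (T := Set.univ) (U := S) (by simp) (by simp)
  have hc' (v : V) : P (c v) j i ↔ v ∈ Sᶜ := by
    rw [h.rel_swap_iff hij, hc, Set.mem_compl_iff]
  have neutral : IsDecisive P F i j Sᶜ ↔ IsDecisive P F j i Sᶜ :=
    ⟨h.isDecisive_of_isDecisive hij hij.symm, h.isDecisive_of_isDecisive hij.symm hij⟩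
  rw [neutral, h.isDecisive_iff hij.symm hc', h.isDecisive_iff hij hc, h.rel_swap_iff hij, not_not]

theorem exists_ultrafilter_isDecisive_iff (h : IsArrovian P F) :
    ∃ 𝒰 : Ultrafilter V, ∀ i j, i ≠ j → ∀ S, IsDecisive P F i j S ↔ S ∈ 𝒰 := by
  have : Nontrivial X :=
    (ENat.one_lt_card_iff_nontrivial X).1 (lt_of_lt_of_le (by norm_num) h.three_le_card)
  obtain ⟨x, y, hxy⟩ := exists_pair_ne X
  let 𝒟 : Filter V :=
    { sets := {S | IsDecisive P F x y S}
      univ_sets := h.isDecisive_univ hxy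
      sets_of_superset := h.isDecisive_mono hxy
      inter_sets := h.isDecisive_inter hxy }
  refine ⟨.ofComplNotMemIff 𝒟 fun S => h.not_isDecisive_compl_iff hxy, fun i j hij S => ?_⟩
  exact ⟨h.isDecisive_of_isDecisive hij hxy, h.isDecisive_of_isDecisive hxy hij⟩

/-- The Kirman–Sondermann form of Arrow's theorem, for an arbitrary set of voters. -/
theorem exists_ultrafilter (h : IsArrovian P F) :
    ∃ 𝒰 : Ultrafilter V, ∀ c i j, P (F c) i j ↔ ∀ᶠ v in 𝒰, P (c v) i j := by
  obtain ⟨𝒰, h𝒰⟩ := h.exists_ultrafilter_isDecisive_iff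
  refine ⟨𝒰, fun c i j => ?_⟩
  obtain rfl | hij := eq_or_ne i j
  · simp only [h.not_rel_self, Filter.eventually_false_iff_eq_bot, 𝒰.neBot.ne]
  · exact (h.isDecisive_iff hij fun v => Iff.rfl).symm.trans (h𝒰 i j hij {v | P (c v) i j})

theorem exists_dictator [Finite V] (h : IsArrovian P F) : ∃ d, ∀ c, P (F c) = P (c d) := by
  obtain ⟨𝒰, h𝒰⟩ := h.exists_ultrafilter
  obtain ⟨d, rfl⟩ := 𝒰.eq_pure_of_finite
  refine ⟨d, fun c => ?_⟩
  ext i j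
  exact h𝒰 c i j

end IsArrovian

end SocialChoice

theorem intUnits_eq_iff {a b : ℤˣ} : a = b ↔ (a = 1 ↔ b = 1) := by
  revert a b
  decide

theorem exists_injective_real_lt_lt {X : Type*} [Countable X] {i j k : X}
    (hij : i ≠ j) (hjk : j ≠ k) (hik : i ≠ k) :
    ∃ x : X → ℝ, Function.Injective x ∧ x j < x i ∧ x k < x j := by
  obtain ⟨f, hf⟩ := exists_injective_nat X
  refine ⟨fun t => if t = i then 2 else if t = j then 1 else -f t, fun s t hst => ?_, ?_, ?_⟩
  · have cast_injective : (f s : ℝ) = f t → s = t := fun h => hf (Nat.cast_injective h)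
    grind
  · simp [hij.symm]
  · grind

namespace Arrangement

section Chambers

variable {ℓ m : ℕ} {ι : Type} [Fintype ι] {A : Arrangement ℓ ι}

namespace Ch

theorem nonempty (C : A.Ch) : C.1.Nonempty := by
  obtain ⟨_, x, hx, rfl⟩ := C
  exact ⟨x, mem_connectedComponentIn hx⟩

theorem subset_complement (C : A.Ch) : C.1 ⊆ A.Complement := by
  obtain ⟨_, x, -, rfl⟩ := C
  exact connectedComponentIn_subset _ _

theorem isPreconnected (C : A.Ch) : IsPreconnected C.1 := by
  obtain ⟨_, x, -, rfl⟩ := C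
  exact isPreconnected_connectedComponentIn

theorem eq_connectedComponentIn (C : A.Ch) {x : Fin ℓ → ℝ} (hx : x ∈ C.1) :
    C.1 = connectedComponentIn A.Complement x := by
  obtain ⟨_, y, _, rfl⟩ := C
  exact connectedComponentIn_eq hx

theorem forall_pos_or_forall_neg (C : A.Ch) (j : ι) :
    (∀ x ∈ C.1, 0 < A.form j x) ∨ (∀ x ∈ C.1, A.form j x < 0) := by
  by_contra! h
  obtain ⟨⟨x, hx, hx0⟩, ⟨y, hy, hy0⟩⟩ := h
  obtain ⟨z, hz, hz0⟩ := C.isPreconnected.intermediate_value hx hy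
    (A.form j).continuous_of_finiteDimensional.continuousOn ⟨hx0, hy0⟩
  exact C.subset_complement hz j hz0

end Ch

theorem eps_one_eq_one_iff (j : ι) (C : A.Ch) :
    A.eps j 1 C = 1 ↔ ∀ x ∈ C.1, 0 < A.form j x := by
  rw [eps, one_mul, ite_eq_left_iff]
  simp

theorem eps_neg_one_eq_one_iff (j : ι) (C : A.Ch) :
    A.eps j (-1) C = 1 ↔ ∀ x ∈ C.1, A.form j x < 0 := by
  have not_forall_pos_iff : (¬ ∀ x ∈ C.1, 0 < A.form j x) ↔ ∀ x ∈ C.1, A.form j x < 0 := by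
    refine ⟨(C.forall_pos_or_forall_neg j).resolve_left, fun hneg hpos => ?_⟩
    obtain ⟨x, hx⟩ := C.nonempty
    exact (hneg x hx).not_gt (hpos x hx)
  rw [← not_forall_pos_iff, eps, neg_one_mul, neg_eq_iff_eq_neg, ite_eq_right_iff]
  exact imp_congr_right fun _ => iff_false_intro (by decide)

theorem Ch.eq_of_eps_eq {C D : A.Ch} (h : ∀ j, A.eps j 1 C = A.eps j 1 D) : C = D := by
  obtain ⟨x, hx⟩ := C.nonempty
  obtain ⟨y, hy⟩ := D.nonempty
  have same_sign (j : ι) : 0 < A.form j x * A.form j y := by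
    have hpos : (∀ x ∈ C.1, 0 < A.form j x) ↔ ∀ y ∈ D.1, 0 < A.form j y := by
      rw [← eps_one_eq_one_iff, ← eps_one_eq_one_iff, h]
    rcases C.forall_pos_or_forall_neg j with hC | hC
    · exact mul_pos (hC x hx) (hpos.1 hC y hy)
    rcases D.forall_pos_or_forall_neg j with hD | hD
    · exact absurd (hpos.2 hD x hx) (hC x hx).not_gt
    · exact mul_pos_of_neg_of_neg (hC x hx) (hD y hy)
  let cone : Set (Fin ℓ → ℝ) := ⋂ j, {z | 0 < A.form j x * A.form j z}
  have cone_convex : Convex ℝ cone :=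
    convex_iInter fun j => convex_halfSpace_gt (A.form j x • A.form j).isLinear 0
  have cone_subset : cone ⊆ A.Complement := fun z hz j =>
    right_ne_zero_of_mul (Set.mem_iInter.1 hz j).ne'
  have x_mem : x ∈ cone :=
    Set.mem_iInter.2 fun j => mul_self_pos.2 (C.subset_complement hx j)
  have y_mem : y ∈ cone := Set.mem_iInter.2 same_sign
  apply Subtype.ext
  rw [C.eq_connectedComponentIn hx, D.eq_connectedComponentIn hy]
  exact connectedComponentIn_eq
    (cone_convex.isPreconnected.subset_connectedComponentIn x_mem cone_subset y_mem)

namespace IsAdmissible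

variable {Φ : (Fin m → A.Ch) → A.Ch}

theorem eps_eq_of_forall (hΦ : A.IsAdmissible m Φ) {j : ι} {σ : ℤˣ} {c d : Fin m → A.Ch}
    (hcd : ∀ v, A.eps j σ (c v) = A.eps j σ (d v)) : A.eps j σ (Φ c) = A.eps j σ (Φ d) := by
  obtain ⟨φ, -, hφ⟩ := hΦ
  rw [hφ, hφ, funext hcd]

theorem eps_eq_one_of_forall (hΦ : A.IsAdmissible m Φ) {j : ι} {σ : ℤˣ} {c : Fin m → A.Ch}
    (hc : ∀ v, A.eps j σ (c v) = 1) : A.eps j σ (Φ c) = 1 := by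
  obtain ⟨φ, hφ_one, hφ⟩ := hΦ
  rw [hφ, funext hc, hφ_one]

end IsAdmissible

/-- The ranking of the coordinates given by a chamber: `C` prefers `i` to `j` if `x i` is the larger
coordinate throughout `C`. -/
def Ch.Prefers (C : A.Ch) (i j : Fin ℓ) : Prop := ∀ x ∈ C.1, x j < x i

end Chambers

section Braid

variable {ℓ m : ℕ} {A : Arrangement ℓ {p : Fin ℓ × Fin ℓ // p.1 < p.2}}

/-- `A` is the braid arrangement, with defining forms `x i - x j` for `i < j`. -/
def IsBraid (A : Arrangement ℓ {p : Fin ℓ × Fin ℓ // p.1 < p.2}) : Prop :=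
  ∀ p, A.form p =
    (LinearMap.proj (R := ℝ) (φ := fun _ : Fin ℓ => ℝ) p.1.1) -
    (LinearMap.proj (R := ℝ) (φ := fun _ : Fin ℓ => ℝ) p.1.2)

namespace IsBraid

theorem form_apply (hA : A.IsBraid) (p : {p : Fin ℓ × Fin ℓ // p.1 < p.2}) (x : Fin ℓ → ℝ) :
    A.form p x = x p.1.1 - x p.1.2 := by
  rw [hA p, LinearMap.sub_apply, LinearMap.proj_apply, LinearMap.proj_apply]

theorem mem_complement_of_injective (hA : A.IsBraid) {x : Fin ℓ → ℝ} (hx : Function.Injective x) :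
    x ∈ A.Complement := fun p => by
  rw [hA.form_apply]
  exact sub_ne_zero.2 (hx.ne p.2.ne)

theorem eps_one_eq_one_iff_prefers (hA : A.IsBraid) (p : {p : Fin ℓ × Fin ℓ // p.1 < p.2})
    (C : A.Ch) : A.eps p 1 C = 1 ↔ C.Prefers p.1.1 p.1.2 := by
  simp only [eps_one_eq_one_iff, hA.form_apply, sub_pos, Ch.Prefers]

theorem eps_neg_one_eq_one_iff_prefers (hA : A.IsBraid) (p : {p : Fin ℓ × Fin ℓ // p.1 < p.2})
    (C : A.Ch) : A.eps p (-1) C = 1 ↔ C.Prefers p.1.2 p.1.1 := by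
  simp only [eps_neg_one_eq_one_iff, hA.form_apply, sub_neg, Ch.Prefers]

theorem exists_eps_eq_one_iff_prefers (hA : A.IsBraid) {i j : Fin ℓ} (hij : i ≠ j) :
    ∃ p σ, ∀ C : A.Ch, A.eps p σ C = 1 ↔ C.Prefers i j := by
  rcases hij.lt_or_gt with hlt | hlt
  · exact ⟨⟨(i, j), hlt⟩, 1, hA.eps_one_eq_one_iff_prefers _⟩
  · exact ⟨⟨(j, i), hlt⟩, -1, hA.eps_neg_one_eq_one_iff_prefers _⟩

theorem prefers_injective (hA : A.IsBraid) : Function.Injective (Ch.Prefers (A := A)) :=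
  fun C D hCD => Ch.eq_of_eps_eq fun p => by
    rw [intUnits_eq_iff, hA.eps_one_eq_one_iff_prefers, hA.eps_one_eq_one_iff_prefers, hCD]

theorem prefers_or_prefers (hA : A.IsBraid) (C : A.Ch) {i j : Fin ℓ} (hij : i ≠ j) :
    C.Prefers i j ∨ C.Prefers j i := by
  wlog hlt : i < j generalizing i j
  · exact (this hij.symm (hij.lt_or_gt.resolve_left hlt)).symm
  · simpa only [hA.form_apply, sub_pos, sub_neg, Ch.Prefers] using
      C.forall_pos_or_forall_neg ⟨(i, j), hlt⟩

theorem isStrictTotalOrder_prefers (hA : A.IsBraid) (C : A.Ch) :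
    IsStrictTotalOrder (Fin ℓ) C.Prefers where
  trichotomous i j hij hji := by
    by_contra hne
    exact (hA.prefers_or_prefers C hne).elim hij hji
  irrefl i hi := by
    obtain ⟨x, hx⟩ := C.nonempty
    exact lt_irrefl _ (hi x hx)
  trans i j k hij hjk x hx := (hjk x hx).trans (hij x hx)

theorem prefers_of_mem (hA : A.IsBraid) {C : A.Ch} {x : Fin ℓ → ℝ} (hx : x ∈ C.1) {i j : Fin ℓ}
    (hji : x j < x i) : C.Prefers i j :=
  (hA.prefers_or_prefers C (ne_of_apply_ne x hji.ne')).resolve_right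
    fun h => (h x hx).not_gt hji

theorem exists_prefers_prefers (hA : A.IsBraid) {i j k : Fin ℓ} (hij : i ≠ j) (hjk : j ≠ k)
    (hik : i ≠ k) : ∃ C : A.Ch, C.Prefers i j ∧ C.Prefers j k := by
  obtain ⟨x, x_injective, hji, hkj⟩ := exists_injective_real_lt_lt hij hjk hik
  have hx := hA.mem_complement_of_injective x_injective
  let C : A.Ch := ⟨connectedComponentIn A.Complement x, x, hx, rfl⟩
  have hxC : x ∈ C.1 := mem_connectedComponentIn hx
  exact ⟨C, hA.prefers_of_mem hxC hji, hA.prefers_of_mem hxC hkj⟩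

theorem isArrovian (hA : A.IsBraid) (hℓ : 3 ≤ ℓ) {Φ : (Fin m → A.Ch) → A.Ch}
    (hΦ : A.IsAdmissible m Φ) : IsArrovian Ch.Prefers Φ where
  three_le_card := by simpa using hℓ
  isStrictTotalOrder := hA.isStrictTotalOrder_prefers
  exists_chain _ _ _ := hA.exists_prefers_prefers
  independence i j hij c d hcd := by
    obtain ⟨p, σ, hp⟩ := hA.exists_eps_eq_one_iff_prefers hij
    simp only [← hp, ← intUnits_eq_iff] at hcd ⊢
    exact hΦ.eps_eq_of_forall hcd
  unanimity i j hij c hc := by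
    obtain ⟨p, σ, hp⟩ := hA.exists_eps_eq_one_iff_prefers hij
    simp only [← hp] at hc ⊢
    exact hΦ.eps_eq_one_of_forall hc

end IsBraid

end Braid

end Arrangement

/-- **Arrow's impossibility theorem (arrangement form).** For the braid arrangement
`𝒜 = {ker (x_i − x_j) : 1 ≤ i < j ≤ ℓ}` in `ℝ^ℓ`, `ℓ ≥ 3`, every admissible map
`Φ : Ch^m → Ch` is the projection onto the `h`-th component for some `h`. -/
theorem arrow_impossibility (ℓ : ℕ) (hℓ : 3 ≤ ℓ)
    (A : Arrangement ℓ {p : Fin ℓ × Fin ℓ // p.1 < p.2})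
    (hA : ∀ p, A.form p =
      (LinearMap.proj (R := ℝ) (φ := fun _ : Fin ℓ => ℝ) p.1.1) -
      (LinearMap.proj (R := ℝ) (φ := fun _ : Fin ℓ => ℝ) p.1.2))
    (m : ℕ) (hm : 0 < m)
    (Φ : (Fin m → A.Ch) → A.Ch) (hΦ : A.IsAdmissible m Φ) :
    ∃ h : Fin m, Φ = fun 𝒞 => 𝒞 h := by
  have hA : A.IsBraid := hA
  obtain ⟨d, hd⟩ := (hA.isArrovian hℓ hΦ).exists_dictator
  exact ⟨d, funext fun c => hA.prefers_injective (hd c)⟩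
end
end
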